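/- Let q be an odd prime power (q = p^e, p odd prime), ℓ > 2, 0 < d < 2ℓ with gcd(ℓ,d) = 1 and ℓ + d odd, β a nonsquare of F_{q^{2ℓ}}, ω ∈ F_{q^{2ℓ}}^* with ω^{q^ℓ} = −ω, and let B = (F_{q^{2ℓ}}, +, ⋆) be the Budaghyan–Helleseth presemifield with x⋆y = x·y^{q^ℓ} + x^{q^ℓ}·y + (β·(x·y^{q^d} + x^{q^d}·y) + β^{q^ℓ}·(x·y^{q^d} + x^{q^d}·y)^{q^ℓ})·ω. Then: (a) for every Dickson semifield D = (F_{Q^k} × F_{Q^k}, +, ⋆_D) with Q an odd prime power, k > 1 odd, j a nonsquare of F_{Q^k}, σ a nontrivial F_Q-automorphism of F_{Q^k}, multiplication (a,b) ⋆_D (c,d) = (a·c + j·b^σ·d^σ, a·d + b·c), and Q^{2k} = q^{2ℓ}, there is no isotopism between B and D (no triple of additive bijections g1,g2,g3 : F_{q^{2ℓ}} → F_{Q^k} × F_{Q^k} with g1(x) ⋆_D g2(y) = g3(x⋆y) for all x,y); (b) for every generalized twisted field T = (F_{Q^t}, +, ⋆_A) with Q an odd prime power, t > 1, multiplication x ⋆_A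 y = x^α·y + x·y^α where α : x ↦ x^{Q^{n'}} is an automorphism of F_{Q^t} whose fixed field is F_Q, α ≠ id, t/gcd(t,n') odd, and Q^t = q^{2ℓ}, there is no isotopism between B and T. -/

import Mathlib

/-- The multiplication `x ⋆ y` of the Budaghyan–Helleseth presemifield
`BH(q,ℓ,d,β)` on `F_{q^{2ℓ}}` (realized as `GaloisField p (e * (2ℓ))`, `q = p^e`). -/
noncomputable def bhMul (p e ℓ d q : ℕ) [Fact p.Prime]
    (β ω : GaloisField p (e * (2 * ℓ))) (x y : GaloisField p (e * (2 * ℓ))) :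
    GaloisField p (e * (2 * ℓ)) :=
  x * y ^ q ^ ℓ + x ^ q ^ ℓ * y +
    (β * (x * y ^ q ^ d + x ^ q ^ d * y) +
        β ^ q ^ ℓ * (x * y ^ q ^ d + x ^ q ^ d * y) ^ q ^ ℓ) * ω

/-- The multiplication of a Dickson semifield on `F_{Q^k} × F_{Q^k}`:
`(a,b) ⋆_D (c,d) = (a·c + j·σ(b)·σ(d), a·d + b·c)`. -/
noncomputable def dicksonMul {p2 e2 k : ℕ} [Fact p2.Prime]
    (j : GaloisField p2 (e2 * k))
    (σ : GaloisField p2 (e2 * k) ≃+* GaloisField p2 (e2 * k))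
    (a c : GaloisField p2 (e2 * k) × GaloisField p2 (e2 * k)) :
    GaloisField p2 (e2 * k) × GaloisField p2 (e2 * k) :=
  (a.1 * c.1 + j * σ a.2 * σ c.2, a.1 * c.2 + a.2 * c.1)

/-- The multiplication of a generalized twisted field on `F_{Q^t}`,
with `α : x ↦ x^{Q^{n'}}`: `x ⋆_A y = x^α·y + x·y^α`. -/
noncomputable def twistedMul {p2 e2 t : ℕ} [Fact p2.Prime] (n' : ℕ)
    (x y : GaloisField p2 (e2 * t)) : GaloisField p2 (e2 * t) :=
  x ^ (p2 ^ e2) ^ n' * y + x * y ^ (p2 ^ e2) ^ n'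

section Characters

variable {K : Type*} [Field K]

/-- Dedekind's independence of characters, for ring endomorphisms of a field. -/
lemma coeff_eq_zero_of_sum_ringHom {ι : Type*} [Fintype ι] (f : ι → K →+* K)
    (hf : Function.Injective f) (a : ι → K) (h : ∀ x, ∑ i, a i * f i x = 0) (i : ι) :
    a i = 0 := by
  have hinj : Function.Injective fun i => (f i : K →* K) := fun i j hij =>
    hf (RingHom.ext fun x => DFunLike.congr_fun hij x)
  have hli := (linearIndependent_monoidHom K K).comp _ hinj
  refine Fintype.linearIndependent_iff.mp hli a ?_ i
  funext x
  simpa using h x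

end Characters

section TwistedField

variable {K : Type*} [Field K] (α : K →+* K)

lemma twisted_coeff_eq_zero (h1 : ∃ x, α x ≠ x) (h2 : ∃ x, α (α x) ≠ x) {a b c : K}
    (h : ∀ x, a * x + b * α x + c * α (α x) = 0) : a = 0 ∧ b = 0 ∧ c = 0 := by
  obtain ⟨x, hx⟩ := h1
  obtain ⟨y, hy⟩ := h2
  have hinj : Function.Injective ![RingHom.id K, α, α.comp α] := by
    have e1 : α ≠ RingHom.id K := fun e => hx (by simp [e])
    have e2 : α.comp α ≠ RingHom.id K := fun e => hy (by simpa using DFunLike.congr_fun e y)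
    have e3 : α.comp α ≠ α := fun e => hx (α.injective (by simpa using DFunLike.congr_fun e x))
    intro i j hij
    fin_cases i <;> fin_cases j <;> simp_all [eq_comm]
  have := coeff_eq_zero_of_sum_ringHom _ hinj ![a, b, c]
    (fun x => by simpa [Fin.sum_univ_three] using h x)
  exact ⟨this 0, this 1, this 2⟩

/-- The middle nucleus of a generalized twisted field consists of the scalars fixed by `α`. -/
lemma twisted_middle_nucleus (h1 : ∃ x, α x ≠ x) (h2 : ∃ x, α (α x) ≠ x)
    (hfix : ∀ x, α (α x) = x → α x = x) (A B : K → K)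
    (h : ∀ x y, α (A x) * y + A x * α y = α x * B y + x * α (B y)) :
    ∃ a, α a = a ∧ ∀ x, A x = a * x := by
  obtain ⟨c, hc⟩ := h1
  have hc' : α c - c ≠ 0 := sub_ne_zero.mpr hc
  obtain ⟨m, n, hA⟩ : ∃ m n, ∀ x, A x = m * α x + n * x := by
    refine ⟨(B c - c * B 1) / (α c - c), (α (B c) - c * α (B 1)) / (α c - c), fun x => ?_⟩
    have e1 := h x 1
    have e2 := h x c
    simp only [map_one] at e1
    field_simp
    linear_combination e2 - c * e1
  obtain ⟨m', n', hB⟩ : ∃ m n, ∀ x, B x = m * α x + n * x := by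
    refine ⟨(A c - c * A 1) / (α c - c), (α (A c) - c * α (A 1)) / (α c - c), fun x => ?_⟩
    have e1 := h 1 x
    have e2 := h c x
    simp only [map_one] at e1
    field_simp
    linear_combination c * e1 - e2
  have key : ∀ y, (n * α y - α m' * α (α y) - α n' * α y = 0) ∧
      (α n * y + m * α y - m' * α y - n' * y = 0) ∧ α m * y = 0 := fun y =>
    twisted_coeff_eq_zero α ⟨c, hc⟩ h2 (fun x => by
      have := h x y
      simp only [hA, hB, map_add, map_mul] at this
      linear_combination this)
  have hm : m = 0 := by simpa using (key 1).2.2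
  obtain ⟨-, e2, -⟩ := twisted_coeff_eq_zero α (a := 0) (b := n - α n') (c := -α m') ⟨c, hc⟩ h2
    (fun y => by linear_combination (key y).1)
  obtain ⟨e3, -, -⟩ := twisted_coeff_eq_zero α (a := α n - n') (b := m - m') (c := 0) ⟨c, hc⟩ h2
    (fun y => by linear_combination (key y).2.1)
  refine ⟨n, hfix n ?_, fun x => by simp [hA, hm]⟩
  rw [sub_eq_zero.mp e3, sub_eq_zero.mp e2]

end TwistedField

section BudaghyanHelleseth

variable {K : Type*} [Field K] (κ τ : K →+* K) (β ω : K)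

/-- The Budaghyan–Helleseth multiplication attached to an involution `κ` and an
endomorphism `τ` of a field. -/
def bhProd (x y : K) : K :=
  x * κ y + κ x * y + (β * (x * τ y + τ x * y) + κ β * κ (x * τ y + τ x * y)) * ω

/-- The endomorphism `κ` is an involution commuting with `τ`, and the point `θ` separates
`1`, `κ`, `τ` and `κτ`. -/
structure Separates (θ : K) : Prop where
  invol : ∀ x, κ (κ x) = x
  comm : ∀ x, κ (τ x) = τ (κ x)
  one_ne_left : κ θ ≠ θ
  one_ne_right : τ θ ≠ θ
  one_ne_comp : κ (τ θ) ≠ θ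

variable {κ τ β ω} {θ : K}

lemma Separates.left_ne_right (hs : Separates κ τ θ) : κ θ ≠ τ θ := fun h =>
  hs.one_ne_comp (by rw [← h, hs.invol])

lemma Separates.left_ne_comp (hs : Separates κ τ θ) : κ θ ≠ κ (τ θ) := fun h =>
  hs.one_ne_right (κ.injective h).symm

lemma Separates.right_ne_comp (hs : Separates κ τ θ) : τ θ ≠ κ (τ θ) := fun h =>
  hs.one_ne_left (τ.injective (h.trans (hs.comm θ)).symm)

lemma Separates.coeff_eq_zero (hs : Separates κ τ θ) {a b c d : K}
    (h : ∀ x, a * x + b * κ x + c * τ x + d * κ (τ x) = 0) :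
    a = 0 ∧ b = 0 ∧ c = 0 ∧ d = 0 := by
  have hinj : Function.Injective ![RingHom.id K, κ, τ, κ.comp τ] := by
    refine Function.Injective.of_comp (f := fun f : K →+* K => f θ) ?_
    have e1 := hs.one_ne_left
    have e2 := hs.one_ne_right
    have e3 := hs.one_ne_comp
    have e4 := hs.left_ne_right
    have e5 := hs.left_ne_comp
    have e6 := hs.right_ne_comp
    intro i j hij
    fin_cases i <;> fin_cases j <;> simp at hij ⊢ <;>
      first | exact absurd hij ‹_› | exact absurd hij.symm ‹_›
  have := coeff_eq_zero_of_sum_ringHom _ hinj ![a, b, c, d]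
    (fun x => by simpa [Fin.sum_univ_four] using h x)
  exact ⟨this 0, this 1, this 2, this 3⟩

/-- Equality of two products splits into equality of the components along `1` and `ω`. -/
lemma bhProd_eq_iff (hinv : ∀ x, κ (κ x) = x) (h2 : (2 : K) ≠ 0) (hω0 : ω ≠ 0)
    (hω : κ ω = -ω) (x y x' y' : K) :
    bhProd κ τ β ω x y = bhProd κ τ β ω x' y' ↔
      x * κ y + κ x * y = x' * κ y' + κ x' * y' ∧
      β * (x * τ y + τ x * y) + κ β * κ (x * τ y + τ x * y) =
        β * (x' * τ y' + τ x' * y') + κ β * κ (x' * τ y' + τ x' * y') := by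
  constructor
  · intro h
    have h' := congrArg κ h
    simp only [bhProd] at h
    simp only [bhProd, map_add, map_mul, hinv, hω] at h'
    simp only [map_add, map_mul] at h ⊢
    constructor
    · refine mul_left_cancel₀ h2 ?_
      linear_combination h + h'
    · refine mul_left_cancel₀ (mul_ne_zero h2 hω0) ?_
      linear_combination h - h'
  · rintro ⟨h, h'⟩
    simp only [bhProd, h, h']

/-- Elements of the middle nucleus have the form `x ↦ a x + b κ(x)`. -/
lemma bhProd_middle_nucleus (hs : Separates κ τ θ) (h2 : (2 : K) ≠ 0) (hω0 : ω ≠ 0)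
    (hω : κ ω = -ω) (hβ : β ≠ 0) (A B : K → K)
    (h : ∀ x y, bhProd κ τ β ω (A x) y = bhProd κ τ β ω x (B y)) :
    ∃ a b, κ (τ a) = a ∧ κ β * κ (τ b) = β * b ∧ ∀ x, A x = a * x + b * κ x := by
  have hinv := hs.invol
  have h' := fun x y => (bhProd_eq_iff hinv h2 hω0 hω _ _ _ _).mp (h x y)
  have hθ : κ θ - θ ≠ 0 := sub_ne_zero.mpr hs.one_ne_left
  obtain ⟨a, b, hA⟩ : ∃ a b, ∀ x, A x = a * x + b * κ x := by
    refine ⟨(κ (B θ) - θ * κ (B 1)) / (κ θ - θ), (B θ - θ * B 1) / (κ θ - θ), fun x => ?_⟩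
    have e1 := (h' x 1).1
    have e2 := (h' x θ).1
    simp only [map_one] at e1
    field_simp
    linear_combination e2 - θ * e1
  obtain ⟨a', b', hB⟩ : ∃ a b, ∀ x, B x = a * x + b * κ x := by
    refine ⟨(κ (A θ) - θ * κ (A 1)) / (κ θ - θ), (A θ - θ * A 1) / (κ θ - θ), fun x => ?_⟩
    have e1 := (h' 1 x).1
    have e2 := (h' θ x).1
    simp only [map_one] at e1
    field_simp
    linear_combination θ * e1 - e2
  have k1 : ∀ y, a * κ y + κ b * y - κ a' * κ y - κ b' * y = 0 := fun y =>
    (hs.coeff_eq_zero (b := b * κ y + κ a * y - a' * y - b' * κ y) (c := 0) (d := 0) (fun x => by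
      have := (h' x y).1
      simp only [hA, hB, map_add, map_mul, hinv] at this
      linear_combination this)).1
  obtain ⟨e1, e2, -⟩ := hs.coeff_eq_zero (a := κ b - κ b') (b := a - κ a') (c := 0) (d := 0)
    (fun y => by linear_combination k1 y)
  have hb : b' = b := (κ.injective (sub_eq_zero.mp e1)).symm
  have ha : a' = κ a := by rw [sub_eq_zero.mp e2, hinv]
  have k2 := fun y => hs.coeff_eq_zero
    (a := β * a * τ y + κ β * κ b * κ (τ y) - β * τ a' * τ y - β * τ b' * τ (κ y))
    (b := β * b * τ y + κ β * κ a * κ (τ y) - κ β * κ (τ a') * κ (τ y)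
      - κ β * κ (τ b') * τ y)
    (c := β * τ a * y + κ β * κ (τ b) * κ y - β * (a' * y + b' * κ y))
    (d := β * τ b * y + κ β * κ (τ a) * κ y - κ β * (κ a' * κ y + κ b' * y)) (fun x => by
      have := (h' x y).2
      simp only [hA, hB, map_add, map_mul, hinv, ← hs.comm] at this ⊢
      linear_combination this)
  obtain ⟨-, -, e3, -⟩ := hs.coeff_eq_zero (a := 0) (b := 0) (c := β * (a - τ a'))
    (d := κ β * κ b - β * τ b') (fun y => by
      have := (k2 y).1
      simp only [← hs.comm] at this
      linear_combination this)
  obtain ⟨-, -, e4, -⟩ := hs.coeff_eq_zero (a := 0) (b := 0) (c := β * b - κ β * κ (τ b'))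
    (d := κ β * (κ a - κ (τ a'))) (fun y => by linear_combination (k2 y).2.1)
  refine ⟨a, b, ?_, ?_, hA⟩
  · have := (mul_eq_zero.mp e3).resolve_left hβ
    rw [ha, ← hs.comm] at this
    exact (sub_eq_zero.mp this).symm
  · rw [hb] at e4
    exact (sub_eq_zero.mp e4).symm

lemma bhProd_mul_conj (hs : Separates κ τ θ) {b : K} (hb : κ β * κ (τ b) = β * b) (x y : K) :
    bhProd κ τ β ω (b * κ x) y = bhProd κ τ β ω x (b * κ y) := by
  have hb' : β * τ b = κ β * κ b := by simpa [hs.invol] using congrArg κ hb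
  simp only [bhProd, map_add, map_mul, hs.invol, ← hs.comm]
  linear_combination (κ (τ x) * y - x * κ (τ y)) * ω * hb' + (τ x * κ y - κ x * τ y) * ω * hb

/-- A tensor `∑ u i ⊗ θ ^ i` over a finite field that is killed by all `g ⊗ h` with
`g θ ≠ h θ` and mapped to `1` by multiplication. -/
lemma exists_separating_tensor [Finite K] (θ : K) : ∃ (n : ℕ) (u : ℕ → K),
    (∑ i ∈ Finset.range n, u i * θ ^ i = 1) ∧
    ∀ g h : K →+* K, g θ ≠ h θ → ∑ i ∈ Finset.range n, g (u i) * h (θ ^ i) = 0 := by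
  classical
  have := Fintype.ofFinite K
  set P : Polynomial K := ∏ z ∈ Finset.univ.erase θ, (Polynomial.X - Polynomial.C z) with hP
  have hP0 : P.eval θ ≠ 0 := by
    rw [hP, Polynomial.eval_prod, Finset.prod_ne_zero_iff]
    intro z hz
    simpa [sub_eq_zero] using (Finset.ne_of_mem_erase hz).symm
  refine ⟨P.natDegree + 1, fun i => (P.eval θ)⁻¹ * P.coeff i, ?_, fun g h hgh => ?_⟩
  · simp_rw [mul_assoc]
    rw [← Finset.mul_sum, ← Polynomial.eval_eq_sum_range, inv_mul_cancel₀ hP0]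
  · simp_rw [map_mul, map_pow, mul_assoc]
    rw [← Finset.mul_sum, ← Polynomial.eval₂_eq_sum_range, hP, Polynomial.eval₂_finsetProd,
      mul_eq_zero]
    right
    obtain ⟨z, hz⟩ := (Finite.injective_iff_surjective.mp g.injective) (h θ)
    exact Finset.prod_eq_zero (i := z)
      (Finset.mem_erase.mpr ⟨fun e => hgh (by rw [← hz, e]), Finset.mem_univ z⟩) (by simp [hz])

/-- Left multiplication by `b κ` never factors through the product. -/
lemma bhProd_mul_conj_ne [Finite K] (hs : Separates κ τ θ) (h2 : (2 : K) ≠ 0)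
    {b : K} (hb : b ≠ 0) (C : K →+ K)
    (hC : ∀ x y, bhProd κ τ β ω (b * κ x) y = C (bhProd κ τ β ω x y)) : False := by
  obtain ⟨n, u, hu1, hu⟩ := exists_separating_tensor θ
  set s := (κ b)⁻¹
  have hs1 : κ b * s = 1 := mul_inv_cancel₀ ((map_ne_zero κ).mpr hb)
  have hs2 : b * κ s = 1 := by simpa [hs.invol] using congrArg κ hs1
  have e1 := hs.one_ne_left
  have e2 := hs.one_ne_right
  have e3 := hs.one_ne_comp
  have e4 := hs.left_ne_right
  have e5 := hs.left_ne_comp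
  have e6 := hs.right_ne_comp
  have s11 : ∑ i ∈ Finset.range n, κ (u i) * κ (θ ^ i) = 1 := by
    simpa using congrArg κ hu1
  have s01 := hu (RingHom.id K) κ e1.symm
  have s10 := hu κ (RingHom.id K) e1
  have s02 := hu (RingHom.id K) τ e2.symm
  have s20 := hu τ (RingHom.id K) e2
  have s12 := hu κ τ e4
  have s21 := hu τ κ e4.symm
  have s03 := hu (RingHom.id K) (κ.comp τ) e3.symm
  have s30 := hu (κ.comp τ) (RingHom.id K) e3
  have s13 := hu κ (κ.comp τ) e5
  have s31 := hu (κ.comp τ) κ e5.symm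
  simp only [RingHom.id_apply, RingHom.comp_apply] at s01 s10 s02 s20 s12 s21 s03 s30 s13 s31
  have h0 : ∑ i ∈ Finset.range n, bhProd κ τ β ω (s * u i) (θ ^ i) = 0 := by
    trans ∑ i ∈ Finset.range n, (s * (u i * κ (θ ^ i)) + κ s * (κ (u i) * θ ^ i)
      + β * s * ω * (u i * τ (θ ^ i)) + β * τ s * ω * (τ (u i) * θ ^ i)
      + κ β * κ s * ω * (κ (u i) * κ (τ (θ ^ i)))
      + κ β * κ (τ s) * ω * (κ (τ (u i)) * κ (θ ^ i)))
    · refine Finset.sum_congr rfl fun i _ => ?_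
      simp only [bhProd, map_add, map_mul]
      ring
    · simp only [Finset.sum_add_distrib, ← Finset.mul_sum, s01, s10, s02, s20, s13, s31]
      ring
  have h1 : ∑ i ∈ Finset.range n, bhProd κ τ β ω (b * κ (s * u i)) (θ ^ i) = 2 := by
    trans ∑ i ∈ Finset.range n, (b * κ s * (κ (u i) * κ (θ ^ i)) + κ b * s * (u i * θ ^ i)
      + β * b * κ s * ω * (κ (u i) * τ (θ ^ i))
      + β * τ b * κ (τ s) * ω * (κ (τ (u i)) * θ ^ i)
      + κ β * κ b * s * ω * (u i * κ (τ (θ ^ i)))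
      + κ β * κ (τ b) * τ s * ω * (τ (u i) * κ (θ ^ i)))
    · refine Finset.sum_congr rfl fun i _ => ?_
      simp only [bhProd, map_add, map_mul, hs.invol, ← hs.comm]
      ring
    · simp only [Finset.sum_add_distrib, ← Finset.mul_sum, s11, hu1, s12, s21, s03, s30, hs1, hs2]
      ring
  simp only [hC] at h1
  rw [← map_sum, h0, map_zero] at h1
  exact h2 h1.symm

end BudaghyanHelleseth

section FiniteField

variable {K : Type*} [Field K] [Finite K]

lemma pow_card_pow_eq_self {Q n : ℕ} (hK : Nat.card K = Q ^ n) (k : ℕ) (x : K) :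
    x ^ (Q ^ n) ^ k = x := by
  have := Fintype.ofFinite K
  rw [← hK, Nat.card_eq_fintype_card]
  exact FiniteField.pow_card_pow k x

/-- A primitive element of a field of order `q ^ n` is fixed by the `m`-th power of the
`q`-Frobenius only if `n ∣ m`. -/
lemma exists_forall_dvd_of_pow_eq_self {q n : ℕ} (hq : 1 < q) (hK : Nat.card K = q ^ n) :
    ∃ θ : K, ∀ m, θ ^ q ^ m = θ → n ∣ m := by
  obtain ⟨g, hg⟩ := IsCyclic.exists_ofOrder_eq_natCard (α := Kˣ)
  rw [Nat.card_units, hK] at hg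
  refine ⟨g, fun m hm => ?_⟩
  have h1 : g ^ (q ^ m - 1) = 1 := by
    have hm' : g ^ q ^ m = g := Units.ext (by simpa using hm)
    have := pow_sub_one_mul (pow_ne_zero m (by omega : q ≠ 0)) g
    rw [hm'] at this
    exact mul_eq_right.mp this
  have h2 := orderOf_dvd_of_pow_eq_one h1
  rw [hg] at h2
  have h3 := Nat.gcd_eq_left h2
  rw [Nat.pow_sub_one_gcd_pow_sub_one] at h3
  have h4 : 1 ≤ q ^ n := Nat.one_le_pow _ _ (by omega)
  have h5 : 1 ≤ q ^ n.gcd m := Nat.one_le_pow _ _ (by omega)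
  have h6 : q ^ n.gcd m = q ^ n := by omega
  exact Nat.gcd_eq_left_iff_dvd.mp (Nat.pow_right_injective hq h6)

lemma pow_eq_self_of_coprime {q n m : ℕ} (hq : 1 < q) (hK : Nat.card K = q ^ n)
    (hmn : Nat.gcd m n = 1) {a : K} (ha : a ^ q ^ m = a) : a ^ q = a := by
  rcases eq_or_ne a 0 with rfl | h0
  · exact zero_pow (by omega)
  have key : ∀ i, a ^ q ^ i = a → a ^ (q ^ i - 1) = 1 := fun i hi => by
    have hpos : q ^ i ≠ 0 := pow_ne_zero _ (by omega)
    have := pow_sub_one_mul hpos a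
    rw [hi] at this
    exact (mul_eq_right₀ h0).mp this
  have h2 : a ^ q ^ n = a := by simpa using pow_card_pow_eq_self hK 1 a
  have h3 := pow_gcd_eq_one.mpr ⟨key m ha, key n h2⟩
  rw [Nat.pow_sub_one_gcd_pow_sub_one, hmn, pow_one] at h3
  rw [← pow_sub_one_mul (by omega : q ≠ 0) a, h3, one_mul]

lemma card_pow_eq_self_le {q : ℕ} (hq : 1 < q) : Nat.card {a : K // a ^ q = a} ≤ q := by
  classical
  have := Fintype.ofFinite K
  rw [Nat.card_eq_fintype_card, Fintype.card_subtype]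
  calc _ ≤ (Polynomial.X ^ q - Polynomial.X : Polynomial K).roots.toFinset.card := by
        refine Finset.card_le_card fun a ha => ?_
        rw [Multiset.mem_toFinset,
          Polynomial.mem_roots (FiniteField.X_pow_card_sub_X_ne_zero K hq)]
        simpa [sub_eq_zero] using ha
    _ ≤ _ := Multiset.toFinset_card_le _
    _ ≤ _ := Polynomial.card_roots' _
    _ = q := FiniteField.X_pow_card_sub_X_natDegree_eq K hq

/-- An instance of Hilbert 90: the equation `β ^ q ^ ℓ * b ^ q ^ m = β * b` has a nonzero solution
when `q ^ m` generates the Galois group over `F_q`. -/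
lemma exists_twisted_fixed {q n m ℓ : ℕ} (hq : 1 < q) (hK : Nat.card K = q ^ n)
    (hmn : Nat.gcd m n = 1) {β : K} (hβ : β ≠ 0) :
    ∃ b : K, b ≠ 0 ∧ β ^ q ^ ℓ * b ^ q ^ m = β * b := by
  have hq1 : (1 : ℕ) ≤ q := by omega
  have hbez := Nat.gcd_eq_gcd_ab (q ^ m - 1) (q ^ n - 1)
  rw [Nat.pow_sub_one_gcd_pow_sub_one, hmn, pow_one, Nat.cast_sub hq1,
    Nat.cast_sub (Nat.one_le_pow m q hq1), Nat.cast_sub (Nat.one_le_pow n q hq1)] at hbez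
  push_cast at hbez
  set s := (q ^ m - 1).gcdA (q ^ n - 1)
  set t := (q ^ m - 1).gcdB (q ^ n - 1)
  obtain ⟨w, hw⟩ : (q : ℤ) - 1 ∣ (q : ℤ) ^ ℓ - 1 := by simpa using sub_dvd_pow_sub_pow (q : ℤ) 1 ℓ
  have h1 : β ^ ((q : ℤ) ^ n - 1) = 1 := by
    have h2 : β ^ q ^ n = β := by simpa using pow_card_pow_eq_self hK 1 β
    rw [zpow_sub_one₀ hβ, ← Nat.cast_pow, zpow_natCast, h2, mul_inv_cancel₀ hβ]
  refine ⟨β ^ (-s * w), zpow_ne_zero _ hβ, ?_⟩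
  have hexp : (q : ℤ) ^ ℓ + -s * w * (q : ℤ) ^ m
      = 1 + -s * w + ((q : ℤ) ^ n - 1) * (t * w) := by
    linear_combination hw + w * hbez
  rw [← zpow_natCast β (q ^ ℓ), ← zpow_natCast _ (q ^ m), ← zpow_mul, ← zpow_add₀ hβ]
  push_cast
  rw [hexp, zpow_add₀ hβ, zpow_mul, h1, one_zpow, mul_one, zpow_add₀ hβ, zpow_one]

end FiniteField

section Frobenius

variable {K : Type*} [Field K] [Finite K]

lemma exists_separates (p : ℕ) [Fact p.Prime] [CharP K p] {e ℓ d q : ℕ} (he : 0 < e)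
    (hq : q = p ^ e) (hℓ : 2 < ℓ) (hd0 : 0 < d) (hd2 : d < 2 * ℓ) (hodd : Odd (ℓ + d))
    (hK : Nat.card K = q ^ (2 * ℓ)) :
    ∃ θ : K, Separates (iterateFrobenius K p (e * ℓ)) (iterateFrobenius K p (e * d)) θ := by
  have hq1 : 1 < q := hq ▸ Nat.one_lt_pow he.ne' (Fact.out : p.Prime).one_lt
  obtain ⟨θ, hθ⟩ := exists_forall_dvd_of_pow_eq_self hq1 hK
  have hpow : ∀ i (x : K), iterateFrobenius K p (e * i) x = x ^ q ^ i := fun i x => by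
    rw [iterateFrobenius_def, hq, pow_mul]
  refine ⟨θ, ?_, ?_, ?_, ?_, ?_⟩
  · intro x
    rw [hpow, hpow, ← pow_mul, ← pow_add, ← two_mul]
    simpa using pow_card_pow_eq_self hK 1 x
  · intro x
    simp only [hpow, ← pow_mul, mul_comm]
  · intro h
    rw [hpow] at h
    have := Nat.le_of_dvd (by omega) (hθ _ h)
    omega
  · intro h
    rw [hpow] at h
    have := Nat.le_of_dvd (by omega) (hθ _ h)
    omega
  · intro h
    rw [hpow, hpow, ← pow_mul, ← pow_add, add_comm] at h
    have h2 : 2 ∣ ℓ + d := (dvd_mul_right 2 ℓ).trans (hθ _ h)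
    exact Nat.not_even_iff_odd.mpr hodd (even_iff_two_dvd.mpr h2)

/-- The middle nucleus of a Budaghyan–Helleseth presemifield has at most `q ^ 2` elements. -/
lemma card_middle_nucleus_le {κ τ : K →+* K} {β ω θ : K} (hs : Separates κ τ θ)
    (h2 : (2 : K) ≠ 0) (hω0 : ω ≠ 0) (hω : κ ω = -ω) (hβ : β ≠ 0) {q : ℕ} (hq : 1 < q)
    (hfix : ∀ a, κ (τ a) = a → a ^ q = a)
    (hex : ∃ b, b ≠ 0 ∧ κ β * κ (τ b) = β * b) {Λ : Type*} (A B : Λ → K → K)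
    (hA : Function.Injective A)
    (h : ∀ l x y, bhProd κ τ β ω (A l x) y = bhProd κ τ β ω x (B l y)) :
    Nat.card Λ ≤ q ^ 2 := by
  obtain ⟨b₀, hb₀, hb⟩ := hex
  have H : ∀ l, ∃ u : {a : K // a ^ q = a} × {a : K // a ^ q = a},
      ∀ x, A l x = u.1 * x + u.2 * b₀ * κ x := fun l => by
    obtain ⟨a, b, ha, hb', hAl⟩ := bhProd_middle_nucleus hs h2 hω0 hω hβ (A l) (B l) (h l)
    have hκβ : κ β ≠ 0 := (map_ne_zero κ).mpr hβ
    have hc : κ (τ (b / b₀)) = b / b₀ := by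
      have h1 : κ (τ b) = β * b / κ β := by rw [← hb', mul_div_cancel_left₀ _ hκβ]
      have h2 : κ (τ b₀) = β * b₀ / κ β := by rw [← hb, mul_div_cancel_left₀ _ hκβ]
      rw [map_div₀, map_div₀, h1, h2]
      field_simp
    exact ⟨(⟨a, hfix a ha⟩, ⟨b / b₀, hfix _ hc⟩), fun x => by
      rw [hAl, div_mul_cancel₀ _ hb₀]⟩
  choose u hu using H
  have hinj : Function.Injective u := fun l l' hl => hA (funext fun x => by rw [hu, hu, hl])
  calc Nat.card Λ ≤ Nat.card ({a : K // a ^ q = a} × {a : K // a ^ q = a}) :=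
        Nat.card_le_card_of_injective u hinj
    _ ≤ q * q := by
        rw [Nat.card_prod]
        exact Nat.mul_le_mul (card_pow_eq_self_le hq) (card_pow_eq_self_le hq)
    _ = q ^ 2 := (sq q).symm

end Frobenius

section Isotopism

lemma dicksonMul_smul {p k e : ℕ} [Fact p.Prime] (j : GaloisField p (e * k))
    (σ : GaloisField p (e * k) ≃+* GaloisField p (e * k)) (l : GaloisField p (e * k))
    (a c : GaloisField p (e * k) × GaloisField p (e * k)) :
    dicksonMul j σ (l • a) c = dicksonMul j σ a (l • c) := by
  simp only [dicksonMul, Prod.smul_fst, Prod.smul_snd, smul_eq_mul, map_mul, Prod.mk.injEq]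
  constructor <;> ring

/-- No isotopism onto a Dickson semifield exists: the scalars would make the middle nucleus of
the Budaghyan–Helleseth presemifield too large. -/
lemma not_isotopic_dickson {K : Type*} [Field K] [Finite K] {κ τ : K →+* K} {β ω θ : K}
    (hs : Separates κ τ θ) (h2 : (2 : K) ≠ 0) (hω0 : ω ≠ 0) (hω : κ ω = -ω) (hβ : β ≠ 0)
    {q ℓ : ℕ} (hq : 1 < q) (hℓ : 2 < ℓ) (hfix : ∀ a, κ (τ a) = a → a ^ q = a)
    (hex : ∃ b, b ≠ 0 ∧ κ β * κ (τ b) = β * b) {p e k : ℕ} [Fact p.Prime] (hek : e * k ≠ 0)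
    (hcard : (p ^ e) ^ (2 * k) = q ^ (2 * ℓ)) (j : GaloisField p (e * k))
    (σ : GaloisField p (e * k) ≃+* GaloisField p (e * k))
    (g₁ g₂ g₃ : K ≃+ (GaloisField p (e * k) × GaloisField p (e * k)))
    (h : ∀ x y, dicksonMul j σ (g₁ x) (g₂ y) = g₃ (bhProd κ τ β ω x y)) : False := by
  have hle := card_middle_nucleus_le hs h2 hω0 hω hβ hq hfix hex
    (fun (l : GaloisField p (e * k)) x => g₁.symm (l • g₁ x))
    (fun l x => g₂.symm (l • g₂ x))
    (fun l l' hl => by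
      have := congrFun hl (g₁.symm (1, 0))
      simpa using congrArg (fun x => (g₁ x).1) this)
    (fun l x y => g₃.injective (by
      rw [← h, ← h, AddEquiv.apply_symm_apply, AddEquiv.apply_symm_apply, dicksonMul_smul]))
  have hkl : (p ^ e) ^ k = q ^ ℓ := by
    rw [mul_comm 2 k, mul_comm 2 ℓ, pow_mul, pow_mul] at hcard
    exact Nat.pow_left_injective two_ne_zero hcard
  rw [GaloisField.card p _ hek, pow_mul, hkl] at hle
  exact absurd hle (not_le.mpr (Nat.pow_lt_pow_right hq hℓ))

/-- No isotopism onto a generalized twisted field exists: there, every element of the middle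
nucleus is a scalar, so it also belongs to the left nucleus. -/
lemma not_isotopic_twisted {K F : Type*} [Field K] [Finite K] [Field F] {κ τ : K →+* K}
    {β ω θ : K} (hs : Separates κ τ θ) (h2 : (2 : K) ≠ 0)
    (hex : ∃ b, b ≠ 0 ∧ κ β * κ (τ b) = β * b) (α : F →+* F) (hα : ∃ x, α x ≠ x)
    (hfix : ∀ x, α (α x) = x → α x = x) (g₁ g₂ g₃ : K ≃+ F)
    (h : ∀ x y, α (g₁ x) * g₂ y + g₁ x * α (g₂ y) = g₃ (bhProd κ τ β ω x y)) : False := by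
  obtain ⟨b, hb0, hb⟩ := hex
  obtain ⟨x₀, hx₀⟩ := hα
  obtain ⟨a, ha, hA⟩ := twisted_middle_nucleus α ⟨x₀, hx₀⟩ ⟨x₀, fun e => hx₀ (hfix _ e)⟩ hfix
    (fun x => g₁ (b * κ (g₁.symm x))) (fun x => g₂ (b * κ (g₂.symm x))) (fun x y => by
      have h1 := h (b * κ (g₁.symm x)) (g₂.symm y)
      have h2 := h (g₁.symm x) (b * κ (g₂.symm y))
      rw [bhProd_mul_conj hs hb, ← h2] at h1
      simpa using h1)
  have hA' : ∀ x, g₁ (b * κ x) = a * g₁ x := fun x => by simpa using hA (g₁ x)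
  refine bhProd_mul_conj_ne (β := β) (ω := ω) hs h2 hb0
    (g₃.symm.toAddMonoidHom.comp ((AddMonoidHom.mulLeft a).comp g₃.toAddMonoidHom))
    (fun x y => g₃.injective ?_)
  simp only [AddMonoidHom.comp_apply, AddEquiv.toAddMonoidHom_eq_coe, AddMonoidHom.coe_coe,
    AddMonoidHom.coe_mulLeft, AddEquiv.apply_symm_apply, ← h, hA', map_mul, ha]
  ring

/-- An iterate of the Frobenius of odd order has the same fixed points as its square. -/
lemma iterateFrobenius_fixed_of_sq {F : Type*} [Field F] [Finite F] {p e t n : ℕ}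
    [Fact p.Prime] [CharP F p] (hF : Nat.card F = (p ^ e) ^ t) (hodd : Odd (t / Nat.gcd t n))
    {x : F} (hx : iterateFrobenius F p (e * n) (iterateFrobenius F p (e * n) x) = x) :
    iterateFrobenius F p (e * n) x = x := by
  set α := iterateFrobenius F p (e * n)
  obtain ⟨m, hm⟩ := hodd
  have hiter : ∀ i, α^[i] x = x ^ (p ^ (e * n)) ^ i := fun i => by
    induction i with
    | zero => simp
    | succ i ih =>
      rw [Function.iterate_succ_apply', ih, iterateFrobenius_def, ← pow_mul, ← pow_succ]
  have h1 : α^[t / Nat.gcd t n] x = x := by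
    obtain ⟨w, hw⟩ := Nat.gcd_dvd_right t n
    have hexp : n * (t / Nat.gcd t n) = t * w := by
      calc n * (t / Nat.gcd t n) = Nat.gcd t n * w * (t / Nat.gcd t n) := by rw [← hw]
        _ = Nat.gcd t n * (t / Nat.gcd t n) * w := mul_right_comm _ _ _
        _ = t * w := by rw [Nat.mul_div_cancel' (Nat.gcd_dvd_left t n)]
    rw [hiter, ← pow_mul p, mul_assoc, hexp, ← mul_assoc, pow_mul, pow_mul]
    exact pow_card_pow_eq_self hF w x
  have h2 : α^[2 * m] x = x := by
    rw [Function.iterate_mul]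
    exact Function.iterate_fixed (by simpa using hx) m
  rw [hm, add_comm, Function.iterate_add_apply, h2] at h1
  simpa using h1

end Isotopism

theorem statement19 (p e ℓ d q : ℕ) [Fact p.Prime] (hp : Odd p) (he : 0 < e)
    (hq : q = p ^ e) (hℓ : 2 < ℓ) (hd0 : 0 < d) (hd2 : d < 2 * ℓ)
    (hgcd : Nat.gcd ℓ d = 1) (hodd : Odd (ℓ + d))
    (β ω : GaloisField p (e * (2 * ℓ)))
    (hβ : ¬ ∃ c : GaloisField p (e * (2 * ℓ)), c ^ 2 = β)
    (hω0 : ω ≠ 0) (hω : ω ^ q ^ ℓ = -ω) :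
    -- (a) no isotopism between the BH presemifield and any Dickson semifield
    -- of the same order
    (∀ (p2 e2 k : ℕ) [Fact p2.Prime], Odd p2 → 0 < e2 → 1 < k → Odd k →
      ∀ (j : GaloisField p2 (e2 * k)),
        (¬ ∃ c : GaloisField p2 (e2 * k), c ^ 2 = j) →
      ∀ (σ : GaloisField p2 (e2 * k) ≃+* GaloisField p2 (e2 * k)),
        (∀ x : GaloisField p2 (e2 * k), x ^ p2 ^ e2 = x → σ x = x) →
        σ ≠ RingEquiv.refl (GaloisField p2 (e2 * k)) →
        (p2 ^ e2) ^ (2 * k) = q ^ (2 * ℓ) →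
        ¬ ∃ g1 g2 g3 : GaloisField p (e * (2 * ℓ)) ≃+
              (GaloisField p2 (e2 * k) × GaloisField p2 (e2 * k)),
            ∀ x y : GaloisField p (e * (2 * ℓ)),
              dicksonMul j σ (g1 x) (g2 y) = g3 (bhMul p e ℓ d q β ω x y)) ∧
    -- (b) no isotopism between the BH presemifield and any generalized twisted
    -- field of the same order
    (∀ (p2 e2 t n' : ℕ) [Fact p2.Prime], Odd p2 → 0 < e2 → 1 < t →
      -- the fixed field of `α : x ↦ x^{Q^{n'}}` is `F_Q`
      (∀ x : GaloisField p2 (e2 * t), x ^ (p2 ^ e2) ^ n' = x ↔ x ^ p2 ^ e2 = x) →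
      -- `α ≠ id`
      (∃ x : GaloisField p2 (e2 * t), x ^ (p2 ^ e2) ^ n' ≠ x) →
      Odd (t / Nat.gcd t n') →
      (p2 ^ e2) ^ t = q ^ (2 * ℓ) →
      ¬ ∃ g1 g2 g3 : GaloisField p (e * (2 * ℓ)) ≃+ GaloisField p2 (e2 * t),
          ∀ x y : GaloisField p (e * (2 * ℓ)),
            twistedMul n' (g1 x) (g2 y) = g3 (bhMul p e ℓ d q β ω x y)) := by
  have hp1 : 1 < p := (Fact.out : p.Prime).one_lt
  have hq1 : 1 < q := hq ▸ Nat.one_lt_pow he.ne' hp1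
  have hK : Nat.card (GaloisField p (e * (2 * ℓ))) = q ^ (2 * ℓ) := by
    rw [GaloisField.card p _ (by positivity), hq, pow_mul]
  have hpow : ∀ i (x : GaloisField p (e * (2 * ℓ))),
      iterateFrobenius _ p (e * i) x = x ^ q ^ i := fun i x => by
    rw [iterateFrobenius_def, hq, pow_mul]
  obtain ⟨θ, hs⟩ := exists_separates (K := GaloisField p (e * (2 * ℓ))) p he hq hℓ hd0 hd2 hodd hK
  have hmul : ∀ x y, bhMul p e ℓ d q β ω x y =
      bhProd (iterateFrobenius _ p (e * ℓ)) (iterateFrobenius _ p (e * d)) β ω x y := fun x y => by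
    simp only [bhMul, bhProd, hpow]
  have hβ0 : β ≠ 0 := fun h => hβ ⟨0, by simp [h]⟩
  have h2 : (2 : GaloisField p (e * (2 * ℓ))) ≠ 0 :=
    Ring.two_ne_zero (by
      rw [ringChar.eq (GaloisField p (e * (2 * ℓ))) p]
      rintro rfl
      exact absurd hp (by decide))
  have hcop : Nat.gcd (d + ℓ) (2 * ℓ) = 1 := by
    refine Nat.Coprime.mul_right ?_ ?_
    · exact (Nat.coprime_two_right).mpr (by rwa [add_comm])
    · simpa [Nat.Coprime, Nat.gcd_comm] using hgcd
  have hcomp : ∀ a : GaloisField p (e * (2 * ℓ)), iterateFrobenius _ p (e * ℓ)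
      (iterateFrobenius _ p (e * d) a) = a ^ q ^ (d + ℓ) := fun a => by
    rw [hpow, hpow, ← pow_mul, ← pow_add]
  have hex : ∃ b : GaloisField p (e * (2 * ℓ)), b ≠ 0 ∧ iterateFrobenius _ p (e * ℓ) β *
      iterateFrobenius _ p (e * ℓ) (iterateFrobenius _ p (e * d) b) = β * b := by
    simp only [hcomp, hpow ℓ β]
    exact exists_twisted_fixed hq1 hK hcop hβ0
  constructor
  · rintro p2 e2 k _ - he2 hk - j - σ - - hcard ⟨g1, g2, g3, h⟩
    refine not_isotopic_dickson hs h2 hω0 ((hpow _ _).trans hω) hβ0 hq1 hℓ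
      (fun a ha => pow_eq_self_of_coprime hq1 hK hcop ((hcomp a).symm.trans ha)) hex
      (by positivity) hcard j σ g1 g2 g3 (fun x y => ?_)
    rw [h, hmul]
  · rintro p2 e2 t n' _ - he2 ht - ⟨x₀, hx₀⟩ hodd' - ⟨g1, g2, g3, h⟩
    have hpow2 : ∀ x : GaloisField p2 (e2 * t),
        iterateFrobenius _ p2 (e2 * n') x = x ^ (p2 ^ e2) ^ n' := fun x => by
      rw [iterateFrobenius_def, pow_mul]
    refine not_isotopic_twisted (ω := ω) hs h2 hex
      (iterateFrobenius (GaloisField p2 (e2 * t)) p2 (e2 * n'))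
      ⟨x₀, by rwa [hpow2]⟩
      (fun x hx => iterateFrobenius_fixed_of_sq
        (by rw [GaloisField.card p2 _ (by positivity), pow_mul]) hodd' hx) g1 g2 g3 (fun x y => ?_)
    rw [← hmul, ← h, twistedMul, hpow2, hpow2]
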